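/- Let α ∈ (0,1) and suppose that both c₁ and c₂ are of type ν for some ν ≥ 0. Let s > 1/2 and let s₁ ∈ ℝ satisfy s₁ − s < min{1, s − ν}. Then there exists a constant C > 0 (depending on α, s, s₁, ν and the type constant K) such that for all sequences a, b : ℤ → ℂ, Σ_{k ∈ ℤ, k ≠ 0} ⟨k⟩^{2s₁} | Σ_{k₁ ∈ ℤ} k · a_{k₁} b_{k − k₁} / (k³ − αk₁³ − α(k − k₁)³) |² ≤ C · (Σ_{m ∈ ℤ} ⟨m⟩^{2s} |a_m|²) · (Σ_{n ∈ ℤ} ⟨n⟩^{2s} |b_n|²). (For k ≠ 0 the denominator k³ − αk₁³ − α(k − k₁)³ = −3αk(k₁ − c₁k)(k₁ − c₂k) never vanishes, since c₁ and c₂ are irrational.) -/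

import Mathlib

/-- The Japanese bracket `⟨x⟩ = (1 + x²)^{1/2}`. -/
noncomputable def jb (x : ℝ) : ℝ := Real.sqrt (1 + x^2)

/-- The larger root `c₁ = 1/2 + √(12/α − 3)/6` of `3αx² − 3αx + (α − 1)`. -/
noncomputable def c1 (α : ℝ) : ℝ := 1/2 + Real.sqrt (12/α - 3)/6

/-- The smaller root `c₂ = 1/2 − √(12/α − 3)/6` of `3αx² − 3αx + (α − 1)`. -/
noncomputable def c2 (α : ℝ) : ℝ := 1/2 - Real.sqrt (12/α - 3)/6

/-- A real number `ρ` is of type `ν` if there is `K > 0` with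
`|ρ − m/n| ≥ K/|n|^{2+ν}` for all integers `m` and all nonzero integers `n`. -/
def IsOfType (ρ ν : ℝ) : Prop :=
  ∃ K > 0, ∀ m n : ℤ, n ≠ 0 → K / |(n : ℝ)| ^ (2 + ν) ≤ |ρ - (m : ℝ) / (n : ℝ)|

/-- The `k₁`-summand of the bilinear form `B₁`: `k·a_{k₁}·b_{k−k₁}/(k³ − αk₁³ − α(k−k₁)³)`. -/
noncomputable def B1term (α : ℝ) (a b : ℤ → ℂ) (k k₁ : ℤ) : ℂ :=
  ((k : ℂ) * a k₁ * b (k - k₁)) /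
    ((((k : ℝ)^3 - α * (k₁ : ℝ)^3 - α * ((k : ℝ) - (k₁ : ℝ))^3 : ℝ)) : ℂ)

/-!
The cubic `k³ - αl³ - α(k-l)³` factors as `-3αk(l - c₁k)(l - c₂k)`, and since `c₁ ≠ c₂` the factor
which is not the smaller one always has size `≳ |k|`. Let `x` be the smaller factor.

* If `|x| ≥ 1`, the symbol gains a full derivative, `⟨k⟩ ≲ |(l - c₁k)(l - c₂k)|`, and the estimate
  is the one that makes `H^s` an algebra: `⟨k⟩^{2s} ≲ ⟨l⟩^{2s} + ⟨k-l⟩^{2s}`.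
* If `|x| < 1`, at most two values of `l` are left for each `k` and each root. There the type
  condition costs `⟨k⟩^ν`, but `l` and `k - l` are both comparable to `k` because the roots differ
  from `0` and `1`, so two factors `⟨k⟩^s` are available.

In both cases `⟨k⟩^{2s₁}` times the squared symbol is at most `⟨l⟩^{2s}⟨k-l⟩^{2s} w(k,l)`
with `∑ₗ w(k,l)` bounded uniformly in `k`. Cauchy–Schwarz in `l` and summation in `k` conclude.
-/

section CauchySchwarz

variable {ι : Type*} {r w g : ι → ℝ}

lemma summable_of_sq_le_mul (hr : ∀ i, 0 ≤ r i) (hw : ∀ i, 0 ≤ w i) (hg : ∀ i, 0 ≤ g i)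
    (hws : Summable w) (hgs : Summable g) (h : ∀ i, r i ^ 2 ≤ w i * g i) : Summable r :=
  .of_nonneg_of_le hr
    (fun i => by linarith [two_mul_le_add_of_sq_le_mul (hw i) (hg i) (h i), hr i]) (hws.add hgs)

lemma sq_tsum_le_tsum_mul_tsum_of_sq_le_mul (hr : ∀ i, 0 ≤ r i) (hw : ∀ i, 0 ≤ w i)
    (hg : ∀ i, 0 ≤ g i) (hws : Summable w) (hgs : Summable g)
    (h : ∀ i, r i ^ 2 ≤ w i * g i) : (∑' i, r i) ^ 2 ≤ (∑' i, w i) * ∑' i, g i :=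
  le_of_tendsto_of_tendsto' ((summable_of_sq_le_mul hr hw hg hws hgs h).hasSum.pow 2)
    (Filter.Tendsto.mul hws.hasSum hgs.hasSum) fun t =>
      t.sum_sq_le_sum_mul_sum_of_sq_le_mul (fun i _ => hw i) (fun i _ => hg i) fun i _ => h i

end CauchySchwarz

section Convolution

variable {G : Type*} [AddCommGroup G] {P Q : G → ℝ}

lemma hasSum_prod_convolution (hP : ∀ m, 0 ≤ P m) (hQ : ∀ n, 0 ≤ Q n) (hPs : Summable P)
    (hQs : Summable Q) :
    HasSum (fun p : G × G => P p.2 * Q (p.1 - p.2)) ((∑' m, P m) * ∑' n, Q n) :=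
  ((Equiv.prodComm G G).trans ((Equiv.refl G).prodShear Equiv.subRight)).hasSum_iff.mpr
    (hPs.hasSum.mul hQs.hasSum (hPs.mul_of_nonneg hQs hP hQ))

theorem tsum_mul_sq_norm_tsum_le_of_convolution_bound {E : Type*} [NormedAddCommGroup E]
    [CompleteSpace E] {T : G → G → E} {J : G → ℝ} {W : G → G → ℝ} {M : ℝ}
    (hJ : ∀ k, 0 < J k) (hW : ∀ k l, 0 ≤ W k l) (hWs : ∀ k, Summable (W k))
    (hWM : ∀ k, ∑' l, W k l ≤ M) (hP : ∀ m, 0 ≤ P m) (hQ : ∀ n, 0 ≤ Q n)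
    (hPs : Summable P) (hQs : Summable Q)
    (h : ∀ k l, J k * ‖T k l‖ ^ 2 ≤ W k l * (P l * Q (k - l))) :
    (∀ k, Summable (T k)) ∧ Summable (fun k => J k * ‖∑' l, T k l‖ ^ 2) ∧
      ∑' k, J k * ‖∑' l, T k l‖ ^ 2 ≤ M * (∑' m, P m) * ∑' n, Q n := by
  have hPQ : ∀ k l, 0 ≤ P l * Q (k - l) := fun k l => mul_nonneg (hP l) (hQ _)
  have hprod := hasSum_prod_convolution hP hQ hPs hQs
  have hconv : ∀ k, Summable fun l => P l * Q (k - l) := hprod.summable.prod_factor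
  have hfib := (hprod.prod_fiberwise fun k => (hconv k).hasSum).mul_left M
  have hWJ : ∀ k l, 0 ≤ W k l / J k := fun k l => div_nonneg (hW k l) (hJ k).le
  have hsq : ∀ k l, ‖T k l‖ ^ 2 ≤ W k l / J k * (P l * Q (k - l)) := fun k l => by
    rw [div_mul_eq_mul_div, le_div_iff₀' (hJ k)]
    exact h k l
  have hT : ∀ k, Summable fun l => ‖T k l‖ := fun k =>
    summable_of_sq_le_mul (fun _ => norm_nonneg _) (hWJ k) (hPQ k) ((hWs k).div_const _)
      (hconv k) (hsq k)
  have hbound : ∀ k, J k * ‖∑' l, T k l‖ ^ 2 ≤ M * ∑' l, P l * Q (k - l) := fun k =>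
    calc J k * ‖∑' l, T k l‖ ^ 2
        ≤ J k * (∑' l, ‖T k l‖) ^ 2 := by
          have := (hJ k).le
          gcongr
          exact norm_tsum_le_tsum_norm (hT k)
      _ ≤ J k * ((∑' l, W k l / J k) * ∑' l, P l * Q (k - l)) :=
          mul_le_mul_of_nonneg_left (sq_tsum_le_tsum_mul_tsum_of_sq_le_mul
            (fun _ => norm_nonneg _) (hWJ k) (hPQ k) ((hWs k).div_const _) (hconv k) (hsq k))
            (hJ k).le
      _ = (∑' l, W k l) * ∑' l, P l * Q (k - l) := by
          rw [tsum_div_const, ← mul_assoc, mul_div_cancel₀ _ (hJ k).ne']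
      _ ≤ M * ∑' l, P l * Q (k - l) :=
          mul_le_mul_of_nonneg_right (hWM k) (tsum_nonneg (hPQ k))
  have hsum : Summable fun k => J k * ‖∑' l, T k l‖ ^ 2 :=
    .of_nonneg_of_le (fun k => mul_nonneg (hJ k).le (sq_nonneg _)) hbound hfib.summable
  refine ⟨fun k => (hT k).of_norm, hsum, ?_⟩
  rw [mul_assoc, ← hfib.tsum_eq]
  exact hsum.tsum_le_tsum hbound hfib.summable

end Convolution

section JapaneseBracket

variable {k l t x y : ℝ}

lemma jb_sq (x : ℝ) : jb x ^ 2 = 1 + x ^ 2 := Real.sq_sqrt (by positivity)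

lemma one_le_jb (x : ℝ) : 1 ≤ jb x := Real.one_le_sqrt.mpr (by nlinarith [sq_nonneg x])

lemma jb_pos (x : ℝ) : 0 < jb x := one_pos.trans_le (one_le_jb x)

lemma jb_rpow_pos (x t : ℝ) : 0 < jb x ^ t := Real.rpow_pos_of_pos (jb_pos x) t

lemma abs_le_jb (x : ℝ) : |x| ≤ jb x := Real.abs_le_sqrt (by linarith)

lemma jb_le_one_add_abs (x : ℝ) : jb x ≤ 1 + |x| := by
  simpa [jb] using sqrt_one_add_norm_sq_le x

lemma jb_le_two_mul_abs (hk : 1 ≤ |k|) : jb k ≤ 2 * |k| := by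
  linarith [jb_le_one_add_abs k]

lemma jb_add_le (x y : ℝ) : jb (x + y) ≤ jb x + jb y := by
  refine Real.sqrt_le_iff.mpr ⟨(add_pos (jb_pos x) (jb_pos y)).le, ?_⟩
  have hxy : x * y ≤ jb x * jb y := (le_abs_self _).trans <| by
    rw [abs_mul]
    exact mul_le_mul (abs_le_jb x) (abs_le_jb y) (abs_nonneg y) (jb_pos x).le
  linarith [jb_sq x, jb_sq y, add_sq x y, add_sq (jb x) (jb y)]

lemma jb_add_rpow_le (ht : 0 ≤ t) (x y : ℝ) :
    jb (x + y) ^ t ≤ 2 ^ t * (jb x ^ t + jb y ^ t) := by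
  have hmax : jb (x + y) ≤ 2 * max (jb x) (jb y) := by
    linarith [jb_add_le x y, le_max_left (jb x) (jb y), le_max_right (jb x) (jb y)]
  calc jb (x + y) ^ t
      ≤ (2 * max (jb x) (jb y)) ^ t := Real.rpow_le_rpow (jb_pos _).le hmax ht
    _ = 2 ^ t * max (jb x) (jb y) ^ t :=
        Real.mul_rpow two_pos.le (le_max_of_le_left (jb_pos x).le)
    _ ≤ 2 ^ t * (jb x ^ t + jb y ^ t) := by
        gcongr
        rcases max_choice (jb x) (jb y) with h | h <;> rw [h] <;>
          linarith [jb_rpow_pos x t, jb_rpow_pos y t]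

lemma jb_rpow_le_two_rpow_abs_mul_abs_rpow (hk : 1 ≤ |k|) (t : ℝ) :
    jb k ^ t ≤ 2 ^ |t| * |k| ^ t := by
  have hk0 : 0 < |k| := one_pos.trans_le hk
  rcases le_total 0 t with ht | ht
  · rw [abs_of_nonneg ht, ← Real.mul_rpow two_pos.le hk0.le]
    exact Real.rpow_le_rpow (jb_pos k).le (jb_le_two_mul_abs hk) ht
  · calc jb k ^ t ≤ |k| ^ t := Real.rpow_le_rpow_of_nonpos hk0 (abs_le_jb k) ht
      _ ≤ 2 ^ |t| * |k| ^ t :=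
        le_mul_of_one_le_left (by positivity) (Real.one_le_rpow one_le_two (abs_nonneg t))

lemma jb_rpow_le_mul_jb_rpow {c : ℝ} (hc : c ≠ 0) (ht : 0 ≤ t) (hk : 1 ≤ |k|)
    (hx : |c * k - x| ≤ 1) : jb k ^ t ≤ (4 / |c|) ^ t * jb x ^ t := by
  rw [← Real.mul_rpow (by positivity) (jb_pos x).le]
  refine Real.rpow_le_rpow (jb_pos k).le ?_ ht
  rw [div_mul_eq_mul_div, le_div_iff₀' (abs_pos.mpr hc)]
  calc |c| * jb k ≤ |c| * (2 * |k|) := by gcongr; exact jb_le_two_mul_abs hk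
    _ = 2 * |c * k| := by rw [abs_mul]; ring
    _ ≤ 2 * (1 + |x|) := by linarith [abs_sub_abs_le_abs_sub (c * k) x]
    _ ≤ 4 * jb x := by linarith [one_le_jb x, abs_le_jb x]

lemma summable_jb_rpow_neg {t : ℝ} (ht : 1 < t) : Summable fun m : ℤ => jb m ^ (-t) := by
  refine .of_norm_bounded_eventually (Real.summable_abs_int_rpow ht) ?_
  filter_upwards [(Set.finite_singleton (0 : ℤ)).compl_mem_cofinite] with m hm
  have hm0 : (m : ℝ) ≠ 0 := by simpa using hm
  rw [Real.norm_of_nonneg (jb_rpow_pos _ _).le]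
  exact Real.rpow_le_rpow_of_nonpos (abs_pos.mpr hm0) (abs_le_jb _) (by linarith)

end JapaneseBracket

section DiophantineType

variable {c ν : ℝ}

lemma IsOfType.irrational (hc : IsOfType c ν) : Irrational c := by
  obtain ⟨K, hK, hbound⟩ := hc
  rw [irrational_iff_ne_rational]
  rintro m n hn rfl
  have hpos : 0 < K / |(n : ℝ)| ^ (2 + ν) :=
    div_pos hK (Real.rpow_pos_of_pos (abs_pos.mpr (Int.cast_ne_zero.mpr hn)) _)
  simpa using hpos.trans_le (hbound m n hn)

lemma IsOfType.exists_le_abs_sub_mul (hc : IsOfType c ν) :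
    ∃ K > 0, ∀ k l : ℤ, k ≠ 0 → K * |(k : ℝ)| ^ (-(1 + ν)) ≤ |(l : ℝ) - c * k| := by
  obtain ⟨K, hK, hbound⟩ := hc
  refine ⟨K, hK, fun k l hk => ?_⟩
  have hk0 : (k : ℝ) ≠ 0 := Int.cast_ne_zero.mpr hk
  have hkpos : 0 < |(k : ℝ)| := abs_pos.mpr hk0
  calc K * |(k : ℝ)| ^ (-(1 + ν))
      = K / |(k : ℝ)| ^ (2 + ν) * |(k : ℝ)| := by
        rw [show -(1 + ν) = -(2 + ν) + 1 by ring, Real.rpow_add_one hkpos.ne',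
          Real.rpow_neg hkpos.le]
        ring
    _ ≤ |c - l / k| * |(k : ℝ)| := by gcongr; exact hbound l k hk
    _ = |(l : ℝ) - c * k| := by
        rw [← abs_mul, sub_mul, div_mul_cancel₀ _ hk0, abs_sub_comm]

end DiophantineType

section SymbolBounds

variable {c ν s s₁ d K k l x y : ℝ}

lemma jb_rpow_le_of_one_le_abs (hs : 0 ≤ s) (hs₁ : s₁ ≤ s + 1) (hd : 0 < d) (hk : 1 ≤ |k|)
    (hx : 1 ≤ |x|) (hy : d * |k| ≤ |y|) :
    jb k ^ (2 * s₁) ≤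
      2 ^ (2 * s) * (2 / d) ^ 2 * (jb l ^ (2 * s) + jb (k - l) ^ (2 * s)) * (x * y) ^ 2 := by
  have hsplit : jb k ^ (2 * s) ≤ 2 ^ (2 * s) * (jb l ^ (2 * s) + jb (k - l) ^ (2 * s)) := by
    simpa using jb_add_rpow_le (by positivity : 0 ≤ 2 * s) l (k - l)
  have hgain : jb k ≤ 2 / d * |x * y| := by
    rw [div_mul_eq_mul_div, le_div_iff₀' hd, abs_mul]
    calc d * jb k ≤ d * (2 * |k|) := by gcongr; exact jb_le_two_mul_abs hk
      _ ≤ 2 * |y| := by linarith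
      _ ≤ 2 * (|x| * |y|) := by gcongr; exact le_mul_of_one_le_left (abs_nonneg y) hx
  calc jb k ^ (2 * s₁)
      ≤ jb k ^ (2 * s + (2 : ℕ)) :=
        Real.rpow_le_rpow_of_exponent_le (one_le_jb k) (by push_cast; linarith)
    _ = jb k ^ (2 * s) * jb k ^ 2 := Real.rpow_add_natCast (jb_pos k).ne' _ _
    _ ≤ 2 ^ (2 * s) * (jb l ^ (2 * s) + jb (k - l) ^ (2 * s)) * (2 / d * |x * y|) ^ 2 :=
        mul_le_mul hsplit (pow_le_pow_left₀ (jb_pos k).le hgain 2) (sq_nonneg _)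
          ((jb_rpow_pos k _).le.trans hsplit)
    _ = _ := by rw [mul_pow, sq_abs]; ring

lemma jb_rpow_le_of_abs_sub_mul_le_one (hs : 0 ≤ s) (hs₁ : s₁ ≤ 2 * s - ν) (hc0 : c ≠ 0)
    (hc1 : c ≠ 1) (hK : 0 < K) (hd : 0 < d) (hk : 1 ≤ |k|) (hle : |l - c * k| ≤ 1)
    (hge : K * |k| ^ (-(1 + ν)) ≤ |l - c * k|) (hy : d * |k| ≤ |y|) :
    jb k ^ (2 * s₁) ≤
      (4 / |c|) ^ (2 * s) * (4 / |1 - c|) ^ (2 * s) * (2 ^ |ν| / (K * d)) ^ 2 *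
        ((l - c * k) * y) ^ 2 * (jb l ^ (2 * s) * jb (k - l) ^ (2 * s)) := by
  have h2s : 0 ≤ 2 * s := by positivity
  have hl : jb k ^ (2 * s) ≤ (4 / |c|) ^ (2 * s) * jb l ^ (2 * s) :=
    jb_rpow_le_mul_jb_rpow hc0 h2s hk (by rwa [abs_sub_comm])
  have hkl : jb k ^ (2 * s) ≤ (4 / |1 - c|) ^ (2 * s) * jb (k - l) ^ (2 * s) :=
    jb_rpow_le_mul_jb_rpow (sub_ne_zero.mpr hc1.symm) h2s hk (by convert hle using 2; ring)
  have hν : jb k ^ (-ν) ≤ 2 ^ |ν| / (K * d) * |(l - c * k) * y| := by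
    rw [div_mul_eq_mul_div, le_div_iff₀' (by positivity)]
    calc K * d * jb k ^ (-ν)
        ≤ K * d * (2 ^ |ν| * |k| ^ (-ν)) := by
          gcongr
          simpa using jb_rpow_le_two_rpow_abs_mul_abs_rpow hk (-ν)
      _ = 2 ^ |ν| * ((K * |k| ^ (-(1 + ν))) * (d * |k|)) := by
          rw [show -ν = -(1 + ν) + 1 by ring, Real.rpow_add_one (by positivity)]
          ring
      _ ≤ 2 ^ |ν| * |(l - c * k) * y| := by rw [abs_mul]; gcongr
  calc jb k ^ (2 * s₁)
      ≤ jb k ^ (2 * s + 2 * s + -ν * (2 : ℕ)) :=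
        Real.rpow_le_rpow_of_exponent_le (one_le_jb k) (by push_cast; linarith)
    _ = jb k ^ (2 * s) * jb k ^ (2 * s) * (jb k ^ (-ν)) ^ 2 := by
        rw [Real.rpow_add (jb_pos k), Real.rpow_add (jb_pos k), Real.rpow_mul_natCast (jb_pos k).le]
    _ ≤ ((4 / |c|) ^ (2 * s) * jb l ^ (2 * s)) * ((4 / |1 - c|) ^ (2 * s) * jb (k - l) ^ (2 * s)) *
          (2 ^ |ν| / (K * d) * |(l - c * k) * y|) ^ 2 := by
        have := jb_rpow_pos k (2 * s)
        have := jb_rpow_pos k (-ν)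
        have := jb_rpow_pos l (2 * s)
        have := jb_rpow_pos (k - l) (2 * s)
        gcongr
    _ = _ := by rw [mul_pow _ |(l - c * k) * y|, sq_abs]; ring

end SymbolBounds

section ResonanceWeight

variable {c s : ℝ} {k l : ℤ}

/-- The Cauchy–Schwarz weight attached to a root `c`. The brackets dominate the frequencies with
`|l - ck| ≥ 1`; the indicator carries the two integers next to `ck`, the only candidates for
`|l - ck| < 1`. -/
noncomputable def resonanceWeight (c s : ℝ) (k l : ℤ) : ℝ :=
  jb l ^ (-(2 * s)) + jb ((k - l : ℤ) : ℝ) ^ (-(2 * s)) +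
    if l ∈ ({⌊c * k⌋, ⌊c * k⌋ + 1} : Finset ℤ) then 1 else 0

lemma resonanceWeight_pos (c s : ℝ) (k l : ℤ) : 0 < resonanceWeight c s k l :=
  add_pos_of_pos_of_nonneg (add_pos (jb_rpow_pos _ _) (jb_rpow_pos _ _)) (by split_ifs <;> simp)

lemma exists_hasSum_resonanceWeight (hs : 1 / 2 < s) :
    ∃ M > 0, ∀ (c : ℝ) (k : ℤ), HasSum (resonanceWeight c s k) M := by
  have hbracket := (summable_jb_rpow_neg (by linarith : 1 < 2 * s)).hasSum
  have hindicator (c : ℝ) (k : ℤ) : HasSum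
      (fun l : ℤ => if l ∈ ({⌊c * k⌋, ⌊c * k⌋ + 1} : Finset ℤ) then (1 : ℝ) else 0) 2 := by
    have h := hasSum_sum_of_ne_finset_zero (s := {⌊c * k⌋, ⌊c * k⌋ + 1})
      (f := fun l : ℤ => if l ∈ ({⌊c * k⌋, ⌊c * k⌋ + 1} : Finset ℤ) then (1 : ℝ) else 0)
      (L := .unconditional ℤ) fun l hl => if_neg hl
    rwa [Finset.sum_ite_mem, Finset.inter_self, Finset.sum_const, Finset.card_pair (by simp),
      two_nsmul, one_add_one_eq_two] at h
  refine ⟨_, ?_, fun c k =>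
    (hbracket.add ((Equiv.subLeft k).hasSum_iff.mpr hbracket)).add (hindicator c k)⟩
  have : 0 ≤ ∑' m : ℤ, jb m ^ (-(2 * s)) := tsum_nonneg fun m => (jb_rpow_pos m _).le
  positivity

lemma jb_rpow_add_jb_rpow_le_resonanceWeight_mul (c s : ℝ) (k l : ℤ) :
    jb l ^ (2 * s) + jb ((k - l : ℤ) : ℝ) ^ (2 * s) ≤
      resonanceWeight c s k l * (jb l ^ (2 * s) * jb ((k - l : ℤ) : ℝ) ^ (2 * s)) := by
  have hl := jb_rpow_pos l (2 * s)
  have hkl := jb_rpow_pos ((k - l : ℤ) : ℝ) (2 * s)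
  rw [resonanceWeight, Real.rpow_neg (jb_pos _).le, Real.rpow_neg (jb_pos _).le]
  set P := jb l ^ (2 * s)
  set Q := jb ((k - l : ℤ) : ℝ) ^ (2 * s)
  calc P + Q = (P⁻¹ + Q⁻¹) * (P * Q) := by field_simp; ring
    _ ≤ _ := by
        refine mul_le_mul_of_nonneg_right ?_ (mul_pos hl hkl).le
        exact le_add_of_nonneg_right (by split_ifs <;> simp)

lemma one_le_resonanceWeight (s : ℝ) (h : |(l : ℝ) - c * k| < 1) :
    1 ≤ resonanceWeight c s k l := by
  have hmem : l ∈ ({⌊c * k⌋, ⌊c * k⌋ + 1} : Finset ℤ) := by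
    obtain ⟨hlower, hupper⟩ := abs_lt.mp h
    have hge : ⌊c * k⌋ ≤ l := by
      rw [← Int.lt_add_one_iff, Int.floor_lt]
      push_cast
      linarith
    have hle : l - 1 ≤ ⌊c * k⌋ := by
      rw [Int.le_floor]
      push_cast
      linarith
    simp only [Finset.mem_insert, Finset.mem_singleton]
    omega
  rw [resonanceWeight, if_pos hmem]
  exact le_add_of_nonneg_left (add_pos (jb_rpow_pos _ _) (jb_rpow_pos _ _)).le

end ResonanceWeight

section TwoRoots

variable {c c' ν s s₁ d : ℝ}

lemma IsOfType.exists_jb_rpow_le_resonanceWeight_mul (hc : IsOfType c ν) (hs : 0 ≤ s)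
    (hs₁ : s₁ ≤ s + 1) (hs₁' : s₁ ≤ 2 * s - ν) (hd : 0 < d) :
    ∃ C > 0, ∀ k l : ℤ, k ≠ 0 → ∀ y : ℝ, d * |(k : ℝ)| ≤ |y| →
      jb k ^ (2 * s₁) ≤ C * resonanceWeight c s k l * ((l - c * k) * y) ^ 2 *
        (jb l ^ (2 * s) * jb ((k - l : ℤ) : ℝ) ^ (2 * s)) := by
  have hc0 : c ≠ 0 := hc.irrational.ne_zero
  have hc1 : c ≠ 1 := hc.irrational.ne_one
  have : 1 - c ≠ 0 := sub_ne_zero.mpr hc1.symm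
  obtain ⟨K, hK, hlower⟩ := hc.exists_le_abs_sub_mul
  set A : ℝ := 2 ^ (2 * s) * (2 / d) ^ 2
  set B : ℝ := (4 / |c|) ^ (2 * s) * (4 / |1 - c|) ^ (2 * s) * (2 ^ |ν| / (K * d)) ^ 2
  have hA : 0 < A := by positivity
  refine ⟨max A B, lt_max_of_lt_left hA, fun k l hk y hy => ?_⟩
  have hk1 : 1 ≤ |(k : ℝ)| := mod_cast Int.one_le_abs hk
  set P := jb l ^ (2 * s)
  set Q := jb ((k - l : ℤ) : ℝ) ^ (2 * s) with hQ
  have hP0 : 0 < P := jb_rpow_pos _ _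
  have hQ0 : 0 < Q := jb_rpow_pos _ _
  have := resonanceWeight_pos c s k l
  rcases le_or_gt 1 |(l : ℝ) - c * k| with hfar | hnear
  · calc jb k ^ (2 * s₁)
        ≤ A * (P + Q) * ((l - c * k) * y) ^ 2 := by
          rw [hQ, Int.cast_sub]
          exact jb_rpow_le_of_one_le_abs hs hs₁ hd hk1 hfar hy
      _ ≤ max A B * (resonanceWeight c s k l * (P * Q)) * ((l - c * k) * y) ^ 2 := by
          gcongr
          · exact le_max_left A B
          · exact jb_rpow_add_jb_rpow_le_resonanceWeight_mul c s k l
      _ = _ := by ring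
  · calc jb k ^ (2 * s₁)
        ≤ B * ((l - c * k) * y) ^ 2 * (P * Q) := by
          rw [hQ, Int.cast_sub]
          exact jb_rpow_le_of_abs_sub_mul_le_one hs hs₁' hc0 hc1 hK hd hk1 hnear.le
            (hlower k l hk) hy
      _ ≤ max A B * resonanceWeight c s k l * ((l - c * k) * y) ^ 2 * (P * Q) := by
          gcongr
          exact (le_max_right A B).trans
            (le_mul_of_one_le_right (hA.le.trans (le_max_left A B))
              (one_le_resonanceWeight s hnear))

lemma half_abs_sub_mul_abs_le_of_abs_le {k l : ℝ} (h : |l - c * k| ≤ |l - c' * k|) :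
    |c - c'| / 2 * |k| ≤ |l - c' * k| := by
  have htriangle := abs_sub (l - c' * k) (l - c * k)
  rw [show l - c' * k - (l - c * k) = (c - c') * k by ring, abs_mul] at htriangle
  linarith

theorem exists_jb_rpow_le_resonanceWeight_add_mul (hc : IsOfType c ν) (hc' : IsOfType c' ν)
    (hcc' : c ≠ c') (hs : 0 ≤ s) (hs₁ : s₁ ≤ s + 1) (hs₁' : s₁ ≤ 2 * s - ν) :
    ∃ C > 0, ∀ k l : ℤ, k ≠ 0 →
      jb k ^ (2 * s₁) ≤ C * (resonanceWeight c s k l + resonanceWeight c' s k l) *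
        ((l - c * k) * (l - c' * k)) ^ 2 *
          (jb l ^ (2 * s) * jb ((k - l : ℤ) : ℝ) ^ (2 * s)) := by
  have hd : 0 < |c - c'| / 2 := half_pos (abs_pos.mpr (sub_ne_zero.mpr hcc'))
  obtain ⟨C, hC, hbound⟩ := hc.exists_jb_rpow_le_resonanceWeight_mul hs hs₁ hs₁' hd
  obtain ⟨C', _, hbound'⟩ := hc'.exists_jb_rpow_le_resonanceWeight_mul hs hs₁ hs₁' hd
  refine ⟨max C C', lt_max_of_lt_left hC, fun k l hk => ?_⟩
  have hw := resonanceWeight_pos c s k l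
  have hw' := resonanceWeight_pos c' s k l
  have hP := jb_rpow_pos l (2 * s)
  have hQ := jb_rpow_pos ((k - l : ℤ) : ℝ) (2 * s)
  rcases le_total |(l : ℝ) - c * k| |(l : ℝ) - c' * k| with h | h
  · refine (hbound k l hk _ (half_abs_sub_mul_abs_le_of_abs_le h)).trans ?_
    gcongr
    · exact le_max_left C C'
    · exact le_add_of_nonneg_right hw'.le
  · refine (hbound' k l hk (l - c * k) ?_).trans ?_
    · rw [abs_sub_comm c c']
      exact half_abs_sub_mul_abs_le_of_abs_le h
    · rw [mul_comm ((l : ℝ) - c' * k)]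
      gcongr
      · exact le_max_right C C'
      · exact le_add_of_nonneg_left hw.le

end TwoRoots

section B1

variable {α ν s s₁ : ℝ}

lemma c1_ne_c2 (hα : α ∈ Set.Ioo (0 : ℝ) 4) : c1 α ≠ c2 α := by
  have hdisc : 0 < √(12 / α - 3) :=
    Real.sqrt_pos.mpr (sub_pos.mpr ((lt_div_iff₀ hα.1).mpr (by linarith [hα.2])))
  unfold c1 c2
  linarith

lemma cubic_eq_mul_sub_c1_mul_sub_c2 (hα : α ∈ Set.Ioc (0 : ℝ) 4) (k l : ℝ) :
    k ^ 3 - α * l ^ 3 - α * (k - l) ^ 3 =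
      -(3 * α * k * ((l - c1 α * k) * (l - c2 α * k))) := by
  have hdisc : 0 ≤ 12 / α - 3 := sub_nonneg.mpr ((le_div_iff₀ hα.1).mpr (by linarith [hα.2]))
  have hroot : α * √(12 / α - 3) ^ 2 = 12 - 3 * α := by
    rw [Real.sq_sqrt hdisc, mul_sub, mul_div_cancel₀ _ hα.1.ne']
    ring
  unfold c1 c2
  linear_combination (-k ^ 3 / 12) * hroot

lemma norm_B1term (hα : α ∈ Set.Ioc (0 : ℝ) 4) (a b : ℤ → ℂ) {k : ℤ} (hk : k ≠ 0) (l : ℤ) :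
    ‖B1term α a b k l‖ =
      ‖a l‖ * ‖b (k - l)‖ / (3 * α * |(l - c1 α * k) * (l - c2 α * k)|) := by
  have hk0 : |(k : ℝ)| ≠ 0 := abs_ne_zero.mpr (Int.cast_ne_zero.mpr hk)
  rw [B1term, cubic_eq_mul_sub_c1_mul_sub_c2 hα, norm_div, norm_mul, norm_mul, Complex.norm_real,
    Complex.norm_intCast, norm_neg, Real.norm_eq_abs, abs_mul (3 * α * k), abs_mul (3 * α),
    abs_of_pos (mul_pos three_pos hα.1), mul_comm (3 * α), mul_assoc, mul_assoc,
    mul_div_mul_left _ _ hk0]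

lemma B1term_zero_left (α : ℝ) (a b : ℤ → ℂ) (l : ℤ) : B1term α a b 0 l = 0 := by
  simp [B1term]

theorem exists_jb_rpow_mul_sq_norm_B1term_le (hα : α ∈ Set.Ioo (0 : ℝ) 4)
    (hc1 : IsOfType (c1 α) ν) (hc2 : IsOfType (c2 α) ν) (hs : 0 ≤ s) (hs₁ : s₁ ≤ s + 1)
    (hs₁' : s₁ ≤ 2 * s - ν) :
    ∃ C > 0, ∀ (a b : ℤ → ℂ) (k l : ℤ),
      jb k ^ (2 * s₁) * ‖B1term α a b k l‖ ^ 2 ≤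
        C * (resonanceWeight (c1 α) s k l + resonanceWeight (c2 α) s k l) *
          ((jb l ^ (2 * s) * ‖a l‖ ^ 2) *
            (jb ((k - l : ℤ) : ℝ) ^ (2 * s) * ‖b (k - l)‖ ^ 2)) := by
  obtain ⟨C, hC, hbound⟩ :=
    exists_jb_rpow_le_resonanceWeight_add_mul hc1 hc2 (c1_ne_c2 hα) hs hs₁ hs₁'
  have hα0 : 0 < α := hα.1
  refine ⟨C / (3 * α) ^ 2, by positivity, fun a b k l => ?_⟩
  have hw1 := resonanceWeight_pos (c1 α) s k l
  have hw2 := resonanceWeight_pos (c2 α) s k l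
  have hP := jb_rpow_pos l (2 * s)
  have hQ := jb_rpow_pos ((k - l : ℤ) : ℝ) (2 * s)
  obtain rfl | hk := eq_or_ne k 0
  · rw [B1term_zero_left, norm_zero, zero_pow two_ne_zero, mul_zero]
    positivity
  rw [norm_B1term (Set.Ioo_subset_Ioc_self hα) a b hk, div_pow, mul_div_assoc']
  refine div_le_of_le_mul₀ (sq_nonneg _) (by positivity) ?_
  refine (mul_le_mul_of_nonneg_right (hbound k l hk) (sq_nonneg _)).trans_eq ?_
  rw [mul_pow (3 * α), sq_abs]
  field_simp

theorem B1_bilinear_estimate_general (α : ℝ) (hα : α ∈ Set.Ioo (0 : ℝ) 4) (ν : ℝ)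
    (hc1 : IsOfType (c1 α) ν) (hc2 : IsOfType (c2 α) ν)
    (s s₁ : ℝ) (hs : 1 / 2 < s) (hs₁ : s₁ - s ≤ min 1 (s - ν)) :
    ∃ C > 0, ∀ a b : ℤ → ℂ,
      Summable (fun m : ℤ => jb (m : ℝ) ^ (2 * s) * ‖a m‖^2) →
      Summable (fun n : ℤ => jb (n : ℝ) ^ (2 * s) * ‖b n‖^2) →
      (∀ k : ℤ, k ≠ 0 → Summable (fun k₁ : ℤ => B1term α a b k k₁)) ∧
      Summable (fun k : ℤ =>
        if k = 0 then (0 : ℝ)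
        else jb (k : ℝ) ^ (2 * s₁) * ‖∑' k₁ : ℤ, B1term α a b k k₁‖^2) ∧
      (∑' k : ℤ,
        if k = 0 then (0 : ℝ)
        else jb (k : ℝ) ^ (2 * s₁) * ‖∑' k₁ : ℤ, B1term α a b k k₁‖^2)
        ≤ C * (∑' m : ℤ, jb (m : ℝ) ^ (2 * s) * ‖a m‖^2)
            * (∑' n : ℤ, jb (n : ℝ) ^ (2 * s) * ‖b n‖^2) := by
  obtain ⟨hs₁_one, hs₁_ν⟩ := le_min_iff.mp hs₁
  obtain ⟨C, hC, hbound⟩ := exists_jb_rpow_mul_sq_norm_B1term_le (s := s) (s₁ := s₁) hα hc1 hc2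
    (by linarith) (by linarith) (by linarith)
  obtain ⟨M, hM, hweight⟩ := exists_hasSum_resonanceWeight hs
  have hW (k : ℤ) := ((hweight (c1 α) k).add (hweight (c2 α) k)).mul_left C
  refine ⟨C * (M + M), by positivity, fun a b ha hb => ?_⟩
  have hif (k : ℤ) : (if k = 0 then (0 : ℝ)
      else jb k ^ (2 * s₁) * ‖∑' l, B1term α a b k l‖ ^ 2) =
        jb k ^ (2 * s₁) * ‖∑' l, B1term α a b k l‖ ^ 2 :=
    ite_eq_right_iff.mpr fun hk => by simp [hk, B1term_zero_left]
  obtain ⟨hsummable, hestimate⟩ := tsum_mul_sq_norm_tsum_le_of_convolution_bound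
    (fun k : ℤ => jb_rpow_pos k (2 * s₁))
    (fun k l => mul_nonneg hC.le
      (add_pos (resonanceWeight_pos _ s k l) (resonanceWeight_pos _ s k l)).le)
    (fun k => (hW k).summable) (fun k => (hW k).tsum_eq.le)
    (fun m => mul_nonneg (jb_rpow_pos m _).le (sq_nonneg _))
    (fun n => mul_nonneg (jb_rpow_pos n _).le (sq_nonneg _)) ha hb (hbound a b)
  simp only [hif]
  exact ⟨fun k _ => hsummable k, hestimate⟩

end B1

/-- The bilinear `H^{s₁} × H^s × H^s` estimate for `B₁`: if `α ∈ (0,1)`, `c₁, c₂` are of type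
`ν ≥ 0`, `s > 1/2` and `s₁ − s < min{1, s − ν}`, then
`Σ_{k ≠ 0} ⟨k⟩^{2s₁} |Σ_{k₁} k·a_{k₁}·b_{k−k₁}/(k³ − αk₁³ − α(k−k₁)³)|²
  ≤ C (Σ_m ⟨m⟩^{2s}|a_m|²)(Σ_n ⟨n⟩^{2s}|b_n|²)`. -/
theorem B1_bilinear_estimate (α : ℝ) (hα : α ∈ Set.Ioo (0 : ℝ) 1) (ν : ℝ) (hν : 0 ≤ ν)
    (hc1 : IsOfType (c1 α) ν) (hc2 : IsOfType (c2 α) ν)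
    (s s₁ : ℝ) (hs : 1/2 < s) (hs₁ : s₁ - s < min 1 (s - ν)) :
    ∃ C > 0, ∀ a b : ℤ → ℂ,
      Summable (fun m : ℤ => jb (m : ℝ) ^ (2 * s) * ‖a m‖^2) →
      Summable (fun n : ℤ => jb (n : ℝ) ^ (2 * s) * ‖b n‖^2) →
      (∀ k : ℤ, k ≠ 0 → Summable (fun k₁ : ℤ => B1term α a b k k₁)) ∧
      Summable (fun k : ℤ =>
        if k = 0 then (0 : ℝ)
        else jb (k : ℝ) ^ (2 * s₁) * ‖∑' k₁ : ℤ, B1term α a b k k₁‖^2) ∧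
      (∑' k : ℤ,
        if k = 0 then (0 : ℝ)
        else jb (k : ℝ) ^ (2 * s₁) * ‖∑' k₁ : ℤ, B1term α a b k k₁‖^2)
        ≤ C * (∑' m : ℤ, jb (m : ℝ) ^ (2 * s) * ‖a m‖^2)
            * (∑' n : ℤ, jb (n : ℝ) ^ (2 * s) * ‖b n‖^2) := by
  exact B1_bilinear_estimate_general α ⟨hα.1, hα.2.trans (by norm_num)⟩ ν hc1 hc2 s s₁ hs hs₁.le
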